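/- arXiv:1902.03178 — 2 statements merged into one kernel-verified Lean document; each statement's English description precedes it below -/
import Mathlib

section
/- Let G be a simple graph on a finite vertex set V and let u, v be adjacent vertices of G. Set A := N_G(u) ∖ (N_G(v) ∪ {v}), B := N_G(v) ∖ (N_G(u) ∪ {u}), and C := N_G(u) ∩ N_G(v). Then the pivot G∧uv satisfies: (1) for distinct x,y ∉ {u,v}, x and y are adjacent in G∧uv iff exactly one of the following holds: x,y are adjacent in G; or x and y lie in two distinct sets among A, B, C; (2) for x ∉ {u,v}, x is adjacent to u in G∧uv iff x is adjacent to v in G, and x is adjacent to v in G∧uv iff x is adjacent to u in G; (3) u and v are adjacent in G∧uv. -/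
open Finset symmDiff

variable {V : Type*}

/-- The neighbourhood of a vertex as a `Finset`. -/
def nbhd [Fintype V] [DecidableEq V] (G : SimpleGraph V) [DecidableRel G.Adj] (v : V) :
    Finset V :=
  Finset.univ.filter (G.Adj v)

/-- The odd neighbourhood of a set of vertices: all vertices with an odd number of
neighbours in `A`. -/
def oddNbhd [Fintype V] [DecidableEq V] (G : SimpleGraph V) [DecidableRel G.Adj]
    (A : Finset V) : Finset V :=
  Finset.univ.filter fun w => Odd (A.filter (G.Adj w)).card

/-- Local complementation of `G` at the vertex `u`. -/
def localComp (G : SimpleGraph V) (u : V) : SimpleGraph V where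
  Adj v w := v ≠ w ∧ Xor' (G.Adj v w) (G.Adj u v ∧ G.Adj u w)
  symm := by
    constructor
    rintro v w ⟨h1, h2⟩
    exact ⟨h1.symm, by rwa [G.adj_comm v w, and_comm] at h2⟩
  loopless := by constructor; rintro v ⟨h, -⟩; exact h rfl

instance {a b : Prop} [Decidable a] [Decidable b] : Decidable (Xor' a b) :=
  inferInstanceAs (Decidable ((a ∧ ¬b) ∨ (b ∧ ¬a)))

instance [DecidableEq V] (G : SimpleGraph V) [DecidableRel G.Adj] (u : V) :
    DecidableRel (localComp G u).Adj :=
  fun v w => inferInstanceAs (Decidable (v ≠ w ∧ Xor' (G.Adj v w) (G.Adj u v ∧ G.Adj u w)))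

/-- The pivot of `G` along the edge `uv`. -/
def pivot (G : SimpleGraph V) (u v : V) : SimpleGraph V :=
  localComp (localComp (localComp G u) v) u

instance [DecidableEq V] (G : SimpleGraph V) [DecidableRel G.Adj] (u v : V) :
    DecidableRel (pivot G u v).Adj :=
  inferInstanceAs (DecidableRel (localComp (localComp (localComp G u) v) u).Adj)

/-!
Write `a`, `b` for the indicator functions over `𝔽₂` of the neighbourhoods of `u` and `v` in `G`.
Outside `{u, v}`, the vertices at which the three local complementations are taken have, each in
the graph reached so far, the neighbourhoods `a`, `a + b` and `b`. So the adjacency of `x` and `y`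
changes by
`a x * a y + (a x + b x) * (a y + b y) + b x * b y = a x * b y + b x * a y`,
a `2 × 2` determinant: it is `1` exactly when `(a x, b x)` and `(a y, b y)` are distinct and
nonzero, that is, when `x` and `y` lie in two distinct sets among `A`, `B`, `C`.
-/

theorem xor_and_polarization (a b c d : Prop) :
    Xor (Xor (a ∧ c) (Xor a b ∧ Xor c d)) (b ∧ d) ↔ Xor (a ∧ d) (b ∧ c) := by
  grind

theorem xor_mem_iff_mem_distinct_parts {α : Type*} (S T : Set α) (x y : α) :
    Xor (x ∈ S ∧ y ∈ T) (x ∈ T ∧ y ∈ S) ↔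
      (x ∈ S \ T ∧ y ∈ T \ S) ∨ (x ∈ T \ S ∧ y ∈ S \ T) ∨
      (x ∈ S \ T ∧ y ∈ S ∩ T) ∨ (x ∈ S ∩ T ∧ y ∈ S \ T) ∨
      (x ∈ T \ S ∧ y ∈ S ∩ T) ∨ (x ∈ S ∩ T ∧ y ∈ T \ S) := by
  simp only [Set.mem_sdiff, Set.mem_inter_iff]
  grind

section LocalComplementation

variable {G : SimpleGraph V} {u v x y : V}

theorem localComp_adj :
    (localComp G u).Adj x y ↔ x ≠ y ∧ Xor (G.Adj x y) (G.Adj u x ∧ G.Adj u y) :=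
  Iff.rfl

theorem localComp_adj_of_ne (hxy : x ≠ y) :
    (localComp G u).Adj x y ↔ Xor (G.Adj x y) (G.Adj u x ∧ G.Adj u y) :=
  localComp_adj.trans (and_iff_right hxy)

theorem localComp_adj_self_left : (localComp G u).Adj u x ↔ G.Adj u x := by
  simpa [localComp_adj, xor_comm _ False] using G.ne_of_adj

theorem localComp_adj_of_adj (hux : G.Adj u x) (hxy : x ≠ y) :
    (localComp G u).Adj x y ↔ Xor (G.Adj u y) (G.Adj x y) := by
  rw [localComp_adj_of_ne hxy, and_iff_right hux, xor_comm]

theorem localComp_localComp_adj_right (huv : G.Adj u v) (hxv : x ≠ v) :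
    (localComp (localComp G u) v).Adj v x ↔ Xor (G.Adj u x) (G.Adj v x) := by
  rw [localComp_adj_self_left, localComp_adj_of_adj huv hxv.symm]

theorem localComp_localComp_adj_left (huv : G.Adj u v) (hxu : x ≠ u) (hxv : x ≠ v) :
    (localComp (localComp G u) v).Adj u x ↔ G.Adj v x := by
  have hvu : (localComp G u).Adj v u := (localComp_adj_self_left.mpr huv).symm
  rw [localComp_adj_of_adj hvu hxu.symm, localComp_adj_self_left,
    localComp_adj_of_adj huv hxv.symm]
  grind

theorem localComp_localComp_adj_self (huv : G.Adj u v) :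
    (localComp (localComp G u) v).Adj u v :=
  (localComp_adj_self_left.mpr (localComp_adj_self_left.mpr huv).symm).symm

end LocalComplementation

section Pivot

variable {G : SimpleGraph V} {u v x y : V}

theorem pivot_adj_self (huv : G.Adj u v) : (pivot G u v).Adj u v :=
  localComp_adj_self_left.mpr (localComp_localComp_adj_self huv)

theorem pivot_adj_left (huv : G.Adj u v) (hxu : x ≠ u) (hxv : x ≠ v) :
    (pivot G u v).Adj u x ↔ G.Adj v x :=
  localComp_adj_self_left.trans (localComp_localComp_adj_left huv hxu hxv)

theorem pivot_adj_right (huv : G.Adj u v) (hxu : x ≠ u) (hxv : x ≠ v) :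
    (pivot G u v).Adj v x ↔ G.Adj u x := by
  rw [pivot, localComp_adj_of_adj (localComp_localComp_adj_self huv) hxv.symm,
    localComp_localComp_adj_left huv hxu hxv, localComp_localComp_adj_right huv hxv]
  grind

theorem pivot_adj_of_ne (huv : G.Adj u v) (hxy : x ≠ y) (hxu : x ≠ u) (hxv : x ≠ v)
    (hyu : y ≠ u) (hyv : y ≠ v) :
    (pivot G u v).Adj x y ↔
      Xor (G.Adj x y) (Xor (G.Adj u x ∧ G.Adj v y) (G.Adj v x ∧ G.Adj u y)) := by
  rw [pivot, localComp_adj_of_ne hxy, localComp_adj_of_ne hxy, localComp_adj_of_ne hxy,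
    localComp_adj_of_adj huv hxv.symm, localComp_adj_of_adj huv hyv.symm,
    localComp_localComp_adj_left huv hxu hxv, localComp_localComp_adj_left huv hyu hyv,
    ← xor_and_polarization]
  simp only [← symmDiff_eq_xor, symmDiff_assoc]

theorem pivot_adj_general (G : SimpleGraph V) (u v : V) (huv : G.Adj u v) (A B C : Set V)
    (hA : A = G.neighborSet u \ (G.neighborSet v ∪ {v}))
    (hB : B = G.neighborSet v \ (G.neighborSet u ∪ {u}))
    (hC : C = G.neighborSet u ∩ G.neighborSet v) :
    (∀ x y, x ≠ y → x ≠ u → x ≠ v → y ≠ u → y ≠ v →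
      ((pivot G u v).Adj x y ↔
        Xor (G.Adj x y)
          ((x ∈ A ∧ y ∈ B) ∨ (x ∈ B ∧ y ∈ A) ∨ (x ∈ A ∧ y ∈ C) ∨ (x ∈ C ∧ y ∈ A) ∨
            (x ∈ B ∧ y ∈ C) ∨ (x ∈ C ∧ y ∈ B)))) ∧
    (∀ x, x ≠ u → x ≠ v →
      (((pivot G u v).Adj x u ↔ G.Adj x v) ∧ ((pivot G u v).Adj x v ↔ G.Adj x u))) ∧
    (pivot G u v).Adj u v := by
  refine ⟨fun x y hxy hxu hxv hyu hyv => ?_, fun x hxu hxv => ⟨?_, ?_⟩, pivot_adj_self huv⟩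
  · have mem_A {z : V} (hzv : z ≠ v) : z ∈ A ↔ z ∈ G.neighborSet u \ G.neighborSet v := by
      simp [hA, hzv]
    have mem_B {z : V} (hzu : z ≠ u) : z ∈ B ↔ z ∈ G.neighborSet v \ G.neighborSet u := by
      simp [hB, hzu]
    rw [pivot_adj_of_ne huv hxy hxu hxv hyu hyv, mem_A hxv, mem_A hyv, mem_B hxu, mem_B hyu, hC,
      ← xor_mem_iff_mem_distinct_parts]
    simp only [SimpleGraph.mem_neighborSet]
  · rw [SimpleGraph.adj_comm, pivot_adj_left huv hxu hxv, G.adj_comm]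
  · rw [SimpleGraph.adj_comm, pivot_adj_right huv hxu hxv, G.adj_comm]

end Pivot

theorem coe_nbhd [Fintype V] [DecidableEq V] (G : SimpleGraph V) [DecidableRel G.Adj] (v : V) :
    (nbhd G v : Set V) = G.neighborSet v := by
  ext w
  simp [nbhd]

theorem pivot_adj [Fintype V] [DecidableEq V] (G : SimpleGraph V) [DecidableRel G.Adj]
    (u v : V) (huv : G.Adj u v) (A B C : Finset V)
    (hA : A = nbhd G u \ (nbhd G v ∪ {v}))
    (hB : B = nbhd G v \ (nbhd G u ∪ {u}))
    (hC : C = nbhd G u ∩ nbhd G v) :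
    (∀ x y, x ≠ y → x ≠ u → x ≠ v → y ≠ u → y ≠ v →
      ((pivot G u v).Adj x y ↔
        Xor' (G.Adj x y)
          ((x ∈ A ∧ y ∈ B) ∨ (x ∈ B ∧ y ∈ A) ∨ (x ∈ A ∧ y ∈ C) ∨ (x ∈ C ∧ y ∈ A) ∨
            (x ∈ B ∧ y ∈ C) ∨ (x ∈ C ∧ y ∈ B)))) ∧
    (∀ x, x ≠ u → x ≠ v →
      (((pivot G u v).Adj x u ↔ G.Adj x v) ∧ ((pivot G u v).Adj x v ↔ G.Adj x u))) ∧
    (pivot G u v).Adj u v := by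
  exact pivot_adj_general G u v huv A B C (by simp [hA, coe_nbhd]) (by simp [hB, coe_nbhd])
    (by simp [hC, coe_nbhd])
end

section
/- If an open graph (G,I,O) admits a causal flow, then it admits a focused gFlow. -/
open Finset symmDiff

variable {V : Type*}

instance {α β : Type*} (G : SimpleGraph β) [DecidableRel G.Adj] (f : α → β) :
    DecidableRel (G.comap f).Adj :=
  fun a b => inferInstanceAs (Decidable (G.Adj (f a) (f b)))

/-- `(g, r)` is a focused gFlow on the open graph `(G, I, O)`: `r` is a strict partial
order, each correction set `g u` (for `u ∉ O`) avoids the inputs, its odd neighbourhood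
meets the non-outputs exactly in `{u}`, and `g u` lies strictly in the future of `u`. -/
def IsFocusedGFlow [Fintype V] [DecidableEq V] (G : SimpleGraph V) [DecidableRel G.Adj]
    (I O : Finset V) (g : V → Finset V) (r : V → V → Prop) : Prop :=
  (∀ a, ¬ r a a) ∧ (∀ a b c, r a b → r b c → r a c) ∧
    ∀ u ∉ O, g u ∩ I = ∅ ∧ oddNbhd G (g u) \ O = {u} ∧ ∀ v ∈ g u, r u v

/-- The open graph `(G, I, O)` admits a focused gFlow. -/
def HasFocusedGFlow [Fintype V] [DecidableEq V] (G : SimpleGraph V) [DecidableRel G.Adj]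
    (I O : Finset V) : Prop :=
  ∃ g r, IsFocusedGFlow G I O g r

/-- `(f, r)` is a causal flow on the open graph `(G, I, O)`: `r` is a strict partial
order and for every non-output `v`: `f v` is a non-input neighbour of `v`, `v ≺ f v`,
and every vertex `w ≠ v` adjacent to `f v` satisfies `v ≺ w`. -/
def IsCausalFlow [Fintype V] [DecidableEq V] (G : SimpleGraph V) [DecidableRel G.Adj]
    (I O : Finset V) (f : V → V) (r : V → V → Prop) : Prop :=
  (∀ a, ¬ r a a) ∧ (∀ a b c, r a b → r b c → r a c) ∧
    ∀ v ∉ O, f v ∉ I ∧ G.Adj v (f v) ∧ r v (f v) ∧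
      ∀ w, w ≠ v → G.Adj (f v) w → r v w

/-- `(g, r)` is a (generalised) gFlow on the open graph `(G, I, O)`. -/
def IsGFlow [Fintype V] [DecidableEq V] (G : SimpleGraph V) [DecidableRel G.Adj]
    (I O : Finset V) (g : V → Finset V) (r : V → V → Prop) : Prop :=
  (∀ a, ¬ r a a) ∧ (∀ a b c, r a b → r b c → r a c) ∧
    ∀ u ∉ O, g u ∩ I = ∅ ∧ u ∈ oddNbhd G (g u) ∧ (∀ v ∈ g u, r u v) ∧
      ∀ v ∈ oddNbhd G (g u), v ≠ u → r u v

/-!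
A causal flow is a gFlow with singleton correction sets. A gFlow is focused by recursion from the
last vertices of the order to the first: correcting at `u` with `g u` may flip later non-outputs
in addition to `u`, and each of these already has a correction set flipping it alone among the
non-outputs. Since `oddNbhd` is linear over `𝔽₂`, with symmetric difference as addition, adding
all those sets to `g u` cancels the surplus.
-/

section SymmDiffCard

variable {α : Type*} [DecidableEq α]

theorem card_symmDiff_add_two_mul_card_inter (A B : Finset α) :
    #(A ∆ B) + 2 * #(A ∩ B) = #A + #B := by
  have card_symmDiff : #(A ∆ B) = #(A \ B) + #(B \ A) :=
    card_union_of_disjoint disjoint_sdiff_sdiff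
  have hA : #(A \ B) + #(A ∩ B) = #A := card_sdiff_add_card_inter A B
  have hB : #(B \ A) + #(A ∩ B) = #B := inter_comm A B ▸ card_sdiff_add_card_inter B A
  lia

theorem odd_card_symmDiff (A B : Finset α) : Odd #(A ∆ B) ↔ (Odd #A ↔ Even #B) := by
  rw [← Nat.odd_add, ← card_symmDiff_add_two_mul_card_inter, Nat.odd_add,
    iff_true_right (even_two_mul _)]

end SymmDiffCard

section OddNeighbourhood

variable [Fintype V] [DecidableEq V] (G : SimpleGraph V) [DecidableRel G.Adj]

theorem mem_oddNbhd {A : Finset V} {w : V} : w ∈ oddNbhd G A ↔ Odd #{v ∈ A | G.Adj w v} :=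
  mem_filter_univ w

theorem mem_oddNbhd_singleton {v w : V} : w ∈ oddNbhd G {v} ↔ G.Adj v w := by
  by_cases hwv : G.Adj w v <;> simp [mem_oddNbhd, filter_singleton, hwv, G.adj_comm v w]

theorem oddNbhd_empty : oddNbhd G ∅ = ∅ := by
  ext w
  simp [mem_oddNbhd]

theorem oddNbhd_symmDiff (A B : Finset V) :
    oddNbhd G (A ∆ B) = oddNbhd G A ∆ oddNbhd G B := by
  ext w
  have filter_symmDiff :
      {v ∈ A ∆ B | G.Adj w v} = {v ∈ A | G.Adj w v} ∆ {v ∈ B | G.Adj w v} := by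
    grind [mem_symmDiff]
  rw [mem_oddNbhd, filter_symmDiff, odd_card_symmDiff, ← Nat.not_odd_iff_even, ← mem_oddNbhd,
    ← mem_oddNbhd, mem_symmDiff]
  tauto

theorem oddNbhd_symmDiff_sdiff (A B O : Finset V) :
    oddNbhd G (A ∆ B) \ O = (oddNbhd G A \ O) ∆ (oddNbhd G B \ O) := by
  simp only [oddNbhd_symmDiff, sdiff_eq, inf_symmDiff_distrib_right]

theorem exists_oddNbhd_sdiff_eq_of_forall_singleton {p : V → Prop} {O T : Finset V}
    (h : ∀ y ∈ T, ∃ A, (∀ v ∈ A, p v) ∧ oddNbhd G A \ O = {y}) :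
    ∃ A, (∀ v ∈ A, p v) ∧ oddNbhd G A \ O = T := by
  induction T using Finset.induction_on with
  | empty => exact ⟨∅, by simp, by simp [oddNbhd_empty]⟩
  | insert y T hyT ih =>
    obtain ⟨A, hpA, hA⟩ := h y (mem_insert_self y T)
    obtain ⟨B, hpB, hB⟩ := ih fun z hz => h z (mem_insert_of_mem hz)
    refine ⟨A ∆ B, by grind [mem_symmDiff], ?_⟩
    rw [oddNbhd_symmDiff_sdiff, hA, hB, insert_eq]
    exact (disjoint_singleton_left.2 hyT).symmDiff_eq_sup

end OddNeighbourhood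

section Flow

variable [Fintype V] [DecidableEq V] {G : SimpleGraph V} [DecidableRel G.Adj] {I O : Finset V}
  {g : V → Finset V} {r : V → V → Prop}

theorem IsCausalFlow.isGFlow {f : V → V} (h : IsCausalFlow G I O f r) :
    IsGFlow G I O (fun v => {f v}) r := by
  obtain ⟨irrefl, trans, flow⟩ := h
  refine ⟨irrefl, trans, fun u hu => ?_⟩
  obtain ⟨not_input, adj, lt, lt_of_adj⟩ := flow u hu
  exact ⟨singleton_inter_of_notMem not_input, (mem_oddNbhd_singleton G).2 adj.symm,
    by simpa only [mem_singleton, forall_eq] using lt,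
    fun v hv hvu => lt_of_adj v hvu ((mem_oddNbhd_singleton G).1 hv)⟩

theorem IsGFlow.wellFounded_swap (h : IsGFlow G I O g r) :
    WellFounded (Function.swap r) :=
  have : Std.Irrefl r := ⟨h.1⟩
  have : IsTrans V r := ⟨h.2.1⟩
  Finite.wellFounded_of_trans_of_irrefl _

theorem IsGFlow.exists_oddNbhd_sdiff_eq_singleton (h : IsGFlow G I O g r) {u : V} (hu : u ∉ O) :
    ∃ A, (∀ v ∈ A, v ∉ I ∧ r u v) ∧ oddNbhd G A \ O = {u} := by
  induction u using h.wellFounded_swap.induction with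
  | _ u ih =>
    obtain ⟨-, trans, flow⟩ := h
    obtain ⟨inter_inputs, mem_odd, lt_of_mem, lt_of_mem_odd⟩ := flow u hu
    have future_correctable : ∀ y ∈ (oddNbhd G (g u) \ O) \ {u},
        ∃ A, (∀ v ∈ A, v ∉ I ∧ r u v) ∧ oddNbhd G A \ O = {y} := by
      intro y hy
      simp only [mem_sdiff, mem_singleton] at hy
      obtain ⟨⟨hy_odd, hyO⟩, hyu⟩ := hy
      have huy : r u y := lt_of_mem_odd y hy_odd hyu
      obtain ⟨A, hA, hAy⟩ := ih y huy hyO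
      exact ⟨A, fun v hv => ⟨(hA v hv).1, trans u y v huy (hA v hv).2⟩, hAy⟩
    obtain ⟨B, hB, hB_odd⟩ := exists_oddNbhd_sdiff_eq_of_forall_singleton G future_correctable
    have hgu : ∀ v ∈ g u, v ∉ I ∧ r u v := fun v hv =>
      ⟨disjoint_left.1 (disjoint_iff_inter_eq_empty.2 inter_inputs) hv, lt_of_mem v hv⟩
    refine ⟨g u ∆ B, by grind [mem_symmDiff], ?_⟩
    have u_mem : {u} ⊆ oddNbhd G (g u) \ O :=
      singleton_subset_iff.2 (mem_sdiff.2 ⟨mem_odd, hu⟩)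
    rw [oddNbhd_symmDiff_sdiff, hB_odd, symmDiff_of_ge sdiff_subset,
      Finset.sdiff_sdiff_eq_self u_mem]

theorem IsGFlow.exists_isFocusedGFlow (h : IsGFlow G I O g r) :
    ∃ g', IsFocusedGFlow G I O g' r := by
  choose! g' hg' odd_g' using fun u (hu : u ∉ O) => h.exists_oddNbhd_sdiff_eq_singleton hu
  refine ⟨g', h.1, h.2.1, fun u hu => ⟨?_, odd_g' u hu, fun v hv => (hg' u hu v hv).2⟩⟩
  exact disjoint_iff_inter_eq_empty.1 (disjoint_left.2 fun v hv => (hg' u hu v hv).1)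

end Flow

theorem hasFocusedGFlow_of_causalFlow [Fintype V] [DecidableEq V]
    (G : SimpleGraph V) [DecidableRel G.Adj] (I O : Finset V)
    (h : ∃ f r, IsCausalFlow G I O f r) :
    HasFocusedGFlow G I O := by
  obtain ⟨f, r, hf⟩ := h
  obtain ⟨g, hg⟩ := hf.isGFlow.exists_isFocusedGFlow
  exact ⟨g, r, hg⟩
end
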